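/- arXiv:2603.28485 — 3 statements merged into one kernel-verified Lean document; each statement's English description precedes it below -/
import Mathlib

section
/- Let n, k be positive integers, for each z ∈ F_{2^k} let f^{(z)} : F_{2^n} → F_2 be a function, and let 𝒱 ⊆ F_{2^n} be an F_2-subspace such that D_{u₁} D_{u₂} f^{(z)}(x) = 0 for all u₁, u₂ ∈ 𝒱, all x ∈ F_{2^n}, and all z ∈ F_{2^k}. Define f : F_{2^n} × F_{2^k} × F_{2^k} → F_2 by f(x,y,z) = f^{(z)}(x) + Tr_1^k(yz). Then 𝒱 × F_{2^k} × {0} is an M-subspace of f; in particular f admits an M-subspace of F_2-dimension dim 𝒱 + k. -/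
/-- The second-order derivative `D_a D_b f (x) = f x + f (x+a) + f (x+b) + f (x+a+b)`. -/
def D2 {V : Type*} [AddCommGroup V] (f : V → ZMod 2) (a b x : V) : ZMod 2 :=
  f x + f (x + a) + f (x + b) + f (x + a + b)

/-- An `M`-subspace of `f` : a subspace on which all second-order derivatives of `f` vanish. -/
def IsMSubspace {V : Type*} [AddCommGroup V] [Module (ZMod 2) V] (f : V → ZMod 2)
    (U : Submodule (ZMod 2) V) : Prop :=
  ∀ a ∈ U, ∀ b ∈ U, ∀ x, D2 f a b x = 0

/-- The absolute trace map of `F_{2^n}`. -/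
noncomputable def Tr (n : ℕ) (x : GaloisField 2 n) : ZMod 2 :=
  Algebra.trace (ZMod 2) (GaloisField 2 n) x

/-- If the bent functions `f⁽ᶻ⁾` share a common `M`-subspace `𝒱`, then the generalized
Maiorana–McFarland function `f(x,y,z) = f⁽ᶻ⁾(x) + Tr(yz)` has the `M`-subspace
`𝒱 × F_{2^k} × {0}`, of dimension `dim 𝒱 + k`. -/
theorem GMM_common_M_subspace (n k : ℕ) (hn : 0 < n) (hk : 0 < k)
    (fz : GaloisField 2 k → GaloisField 2 n → ZMod 2)
    (𝒱 : Submodule (ZMod 2) (GaloisField 2 n))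
    (h𝒱 : ∀ z : GaloisField 2 k, ∀ u₁ ∈ 𝒱, ∀ u₂ ∈ 𝒱, ∀ x, D2 (fz z) u₁ u₂ x = 0)
    (f : GaloisField 2 n × GaloisField 2 k × GaloisField 2 k → ZMod 2)
    (hf : ∀ x y z, f (x, y, z) = fz z x + Tr k (y * z)) :
    IsMSubspace f (𝒱.prod ((⊤ : Submodule (ZMod 2) (GaloisField 2 k)).prod
        (⊥ : Submodule (ZMod 2) (GaloisField 2 k)))) ∧
    Module.finrank (ZMod 2)
        (𝒱.prod ((⊤ : Submodule (ZMod 2) (GaloisField 2 k)).prod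
          (⊥ : Submodule (ZMod 2) (GaloisField 2 k)))) =
      Module.finrank (ZMod 2) 𝒱 + k := by
  constructor
  · rintro ⟨a1, a2, a3⟩ ha ⟨b1, b2, b3⟩ hb ⟨x, y, z⟩
    simp only [Submodule.mem_prod, Submodule.mem_top, Submodule.mem_bot, true_and] at ha hb
    obtain ⟨ha1, rfl⟩ := ha
    obtain ⟨hb1, rfl⟩ := hb
    have h := h𝒱 z a1 ha1 b1 hb1 x
    have h2 : (2 : ZMod 2) = 0 := rfl
    simp only [D2, Prod.mk_add_mk, hf, add_zero, Tr, add_mul, map_add] at h ⊢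
    linear_combination h + (2 * Algebra.trace (ZMod 2) (GaloisField 2 k) (y * z)
      + Algebra.trace (ZMod 2) (GaloisField 2 k) (a2 * z)
      + Algebra.trace (ZMod 2) (GaloisField 2 k) (b2 * z)) * h2
  · let e : (𝒱.prod ((⊤ : Submodule (ZMod 2) (GaloisField 2 k)).prod
          (⊥ : Submodule (ZMod 2) (GaloisField 2 k)))) ≃ₗ[ZMod 2] (𝒱 × GaloisField 2 k) :=
      { toFun := fun p => (⟨p.1.1, p.2.1⟩, p.1.2.1)
        invFun := fun q => ⟨(q.1.1, q.2, 0), q.1.2, Submodule.mem_top, Submodule.zero_mem _⟩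
        map_add' := fun _ _ => rfl
        map_smul' := fun _ _ => rfl
        left_inv := by
          rintro ⟨⟨a, b, c⟩, h1, h2, h3⟩
          have h4 : c = 0 := h3
          subst h4
          rfl
        right_inv := fun _ => rfl }
    rw [e.finrank_eq, Module.finrank_prod, GaloisField.finrank 2 hk.ne']
end

section
/- Let m ≥ 1 and r ≥ 1 be integers, and let P ∈ F_{2^m}[X] be a polynomial of odd degree t. For i = 1, …, r let α_i, β_i, κ_i, υ_i ∈ F_{2^m} with κ_i ≠ 0 and α_i υ_i + β_i κ_i ≠ 0, and suppose there exists an index j such that υ_j/κ_j ≠ υ_i/κ_i for all i ≠ j. Let θ ∈ F_{2^m}, and let N be the number of pairs (x,z) ∈ F_{2^m} × F_{2^m} such that x ≠ υ_i/κ_i for all i and z² + z = Σ_{i=1}^{r} P((α_i x + β_i)/(κ_i x + υ_i)) + θ. Then, as real numbers, N ≥ 2^m − 1 − (rt + 1)·rt·2^{m/2} − r(rt + 2). Moreover, if m ≥ 4 and rt ≤ 2^{m/4} − 1, then N > 0. -/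
open Polynomial in
lemma aux_norm_degree {K : Type*} [Field K] (G B : K[X]) (g : ℕ) (hG : G.natDegree = 2 * g + 1)
    (hB : B.natDegree ≤ g) (v : QuadraticAlgebra K[X] G B) (n : ℕ) :
    (QuadraticAlgebra.norm v).degree < (n : WithBot ℕ) ↔
      v.re ∈ degreeLT K ((n + 1) / 2) ∧ v.im ∈ degreeLT K ((n - 2 * g) / 2) := by
  have hG0 : G ≠ 0 := by rintro rfl; simp at hG
  rw [QuadraticAlgebra.norm_def, mem_degreeLT, mem_degreeLT]
  obtain ⟨a, b⟩ := v
  simp only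
  by_cases ha : a = 0
  · subst ha
    by_cases hb : b = 0
    · subst hb; simp
    · have h0 : G * b * b ≠ 0 := by simp [hG0, hb]
      simp only [mul_zero, zero_mul, zero_add, zero_sub, degree_neg, degree_zero, WithBot.bot_lt_coe, true_and]
      rw [degree_eq_natDegree h0, degree_eq_natDegree hb, natDegree_mul (by simp [hG0, hb]) hb,
        natDegree_mul hG0 hb, hG]
      norm_cast
      simp
      omega
  by_cases hb : b = 0
  · subst hb
    have h0 : a * a ≠ 0 := by simp [ha]
    simp only [mul_zero, add_zero, sub_zero, degree_zero]
    rw [degree_eq_natDegree h0, degree_eq_natDegree ha, natDegree_mul ha ha]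
    norm_cast
    simp
    omega
  have h1 : (a * a).natDegree = a.natDegree + a.natDegree := natDegree_mul ha ha
  have h2 : (G * b * b).natDegree = 2 * g + 1 + b.natDegree + b.natDegree := by
    rw [natDegree_mul (by simp [hG0, hb]) hb, natDegree_mul hG0 hb, hG]
  have h3 : (B * a * b).natDegree ≤ g + a.natDegree + b.natDegree := by
    refine natDegree_mul_le.trans ?_
    have := natDegree_mul_le (p := B) (q := a)
    omega
  rcases lt_or_ge (b.natDegree + g) a.natDegree with h | h
  · have h4 : (B * a * b - G * b * b).natDegree < (a * a).natDegree := by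
      refine (natDegree_sub_le _ _).trans_lt ?_
      rw [max_lt_iff]; omega
    have h5 : (a * a + B * a * b - G * b * b).natDegree = 2 * a.natDegree := by
      rw [add_sub_assoc, natDegree_add_eq_left_of_natDegree_lt h4]; omega
    have h6 : a * a + B * a * b - G * b * b ≠ 0 := by
      intro h0; rw [h0] at h5; simp at h5; omega
    rw [degree_eq_natDegree h6, degree_eq_natDegree ha, degree_eq_natDegree hb, h5]
    norm_cast
    omega
  · have h4 : (a * a + B * a * b).natDegree < (G * b * b).natDegree := by
      refine (natDegree_add_le _ _).trans_lt ?_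
      rw [max_lt_iff]; omega
    have h5 : (a * a + B * a * b - G * b * b).natDegree = 2 * b.natDegree + 2 * g + 1 := by
      rw [natDegree_sub_eq_right_of_natDegree_lt h4]; omega
    have h6 : a * a + B * a * b - G * b * b ≠ 0 := by
      intro h0; rw [h0] at h5; simp at h5
    rw [degree_eq_natDegree h6, degree_eq_natDegree ha, degree_eq_natDegree hb, h5]
    norm_cast
    omega

open Polynomial in
/-- evaluation at a point -/
noncomputable def auxEv {K : Type*} [Field K] (G B : K[X]) (y w : K)
    (h : w * w = G.eval y + B.eval y * w) : QuadraticAlgebra K[X] G B →+* K where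
  toFun v := v.re.eval y + w * v.im.eval y
  map_one' := by simp [QuadraticAlgebra.re_one, QuadraticAlgebra.im_one]
  map_zero' := by simp
  map_add' u v := by simp; ring
  map_mul' u v := by
    simp
    linear_combination (-u.im.eval y * v.im.eval y) * h

open Polynomial in
lemma aux_card_degreeLT (K : Type*) [Field K] [Fintype K] (n : ℕ) :
    Nat.card (degreeLT K n) = Fintype.card K ^ n := by
  rw [Nat.card_congr (degreeLTEquiv K n).toEquiv]
  simp

open Polynomial in
/-- basis monomials -/
noncomputable def auxF {K : Type*} [Field K] (G B : K[X]) (c d : ℕ) :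
    Fin c ⊕ Fin d → QuadraticAlgebra K[X] G B
  | .inl i => ⟨X ^ (i : ℕ), 0⟩
  | .inr i => ⟨0, X ^ (i : ℕ)⟩

/-- weights -/
def auxW (g c d : ℕ) : Fin c ⊕ Fin d → ℕ
  | .inl i => 2 * i
  | .inr i => 2 * i + (2 * g + 1)

lemma auxW_inj (g c d : ℕ) : Function.Injective (auxW g c d) := by
  rintro (⟨i, hi⟩ | ⟨i, hi⟩) (⟨j, hj⟩ | ⟨j, hj⟩) h <;> simp [auxW] at h ⊢ <;> omega

open Polynomial in
lemma auxF_deg {K : Type*} [Field K] (G B : K[X]) (g c d : ℕ) (hG : G.natDegree = 2 * g + 1) (i) :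
    (QuadraticAlgebra.norm (auxF G B c d i)).degree = (auxW g c d i : WithBot ℕ) := by
  have hG0 : G ≠ 0 := by rintro rfl; simp at hG
  rcases i with i | i
  · simp [auxF, auxW, QuadraticAlgebra.norm_def, two_mul]
  · simp [auxF, auxW, QuadraticAlgebra.norm_def, two_mul, degree_eq_natDegree hG0, hG]
    norm_cast
    omega

open Polynomial in
/-- elements of bounded weight -/
abbrev auxL (K : Type*) [Field K] (g n : ℕ) : Type _ :=
  degreeLT K ((n + 1) / 2) × degreeLT K ((n - 2 * g) / 2)

open Polynomial in
set_option maxHeartbeats 1000000 in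
lemma aux_core {K : Type*} [Field K] [Fintype K] [CharP K 2] (G B : K[X]) (g a b : ℕ)
    (hG : G.natDegree = 2 * g + 1) (hB : B.natDegree ≤ g)
    (hq : Fintype.card K = 2 ^ a * 2 ^ b) (hab : a ≤ b) (hb : (g + 1) ^ 2 < 2 ^ b)
    (S : Finset K) (hS : ∀ y ∈ S, B.eval y ≠ 0 ∧ ∃ w, w * w = G.eval y + B.eval y * w) :
    2 * S.card < Fintype.card K + (2 * g + 1) * 2 ^ b := by
  classical
  set s := 2 ^ a with hs
  set s' := 2 ^ b with hs'
  have hs0 : 0 < s := by positivity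
  have hss : s ≤ s' := Nat.pow_le_pow_right (by norm_num) hab
  have hG0 : G ≠ 0 := by rintro rfl; simp at hG
  let D : (QuadraticAlgebra K[X] G B) → WithBot ℕ := fun v => (QuadraticAlgebra.norm v).degree
  have hD : ∀ (v : (QuadraticAlgebra K[X] G B)) (n : ℕ), D v < n ↔
      v.re ∈ degreeLT K ((n + 1) / 2) ∧ v.im ∈ degreeLT K ((n - 2 * g) / 2) :=
    aux_norm_degree G B g hG hB
  have hDmul : ∀ u v : (QuadraticAlgebra K[X] G B), D (u * v) = D u + D v := by
    intro u v; simp [D, map_mul]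
  have hDneg : ∀ u : QuadraticAlgebra K[X] G B, D (-u) = D u := by
    intro u; simp only [D, QuadraticAlgebra.norm_neg]
  have hDpow : ∀ (u : (QuadraticAlgebra K[X] G B)) (n : ℕ), D (u ^ n) = n • D u := by
    intro u n; simp [D, map_pow, degree_pow]
  have hDsum : ∀ {ι : Type} (T : Finset ι) (f : ι → (QuadraticAlgebra K[X] G B)) (n : ℕ), (∀ i ∈ T, D (f i) < n) →
      D (∑ i ∈ T, f i) < n := by
    intro ι T f n h
    rw [hD]
    have := fun i hi => (hD (f i) n).1 (h i hi)
    have e1 : (∑ i ∈ T, f i).re = ∑ i ∈ T, (f i).re :=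
      map_sum (QuadraticAlgebra.reₗ G B) f T
    have e2 : (∑ i ∈ T, f i).im = ∑ i ∈ T, (f i).im :=
      map_sum (QuadraticAlgebra.imₗ G B) f T
    rw [e1, e2]
    exact ⟨Submodule.sum_mem _ fun i hi => (this i hi).1, Submodule.sum_mem _ fun i hi => (this i hi).2⟩
  have hD0 : ∀ v : (QuadraticAlgebra K[X] G B), D v < 0 → v = 0 := by
    intro v h
    have := (hD v 0).1 (by exact_mod_cast h)
    simp [mem_degreeLT] at this
    ext1
    · simpa [Nat.WithBot.lt_zero_iff] using this.1
    · simpa [Nat.WithBot.lt_zero_iff] using this.2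
  have : CharP (QuadraticAlgebra K[X] G B) 2 := by
    have : CharP K[X] 2 := inferInstance
    exact charP_of_injective_algebraMap (R := K[X]) (A := (QuadraticAlgebra K[X] G B)) QuadraticAlgebra.algebraMap_injective 2
  have : Fact (Nat.Prime 2) := ⟨Nat.prime_two⟩
  let c := (s + 2 * g + 2) / 2
  let d := (s + 1) / 2
  have hcd : c + d = s + g + 1 := by simp only [c, d]; omega
  let f : Fin c ⊕ Fin d → (QuadraticAlgebra K[X] G B) := auxF G B c d
  let W : Fin c ⊕ Fin d → ℕ := auxW g c d
  have hf : ∀ i, D (f i) = (W i : WithBot ℕ) := auxF_deg G B g c d hG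
  have hW : ∀ i, W i < s + 2 * g + 1 := by
    rintro (⟨i, hi⟩ | ⟨i, hi⟩) <;> simp only [W, auxW, c, d] at * <;> omega
  have hLfin : ∀ n, Finite (degreeLT K n) := fun n =>
    Finite.of_equiv _ (degreeLTEquiv K n).symm.toEquiv
  have hLcard : ∀ n, 2 * g ≤ n → Nat.card (auxL K g n) = Fintype.card K ^ (n - g) := by
    intro n hn
    simp only [auxL]
    rw [Nat.card_prod, aux_card_degreeLT, aux_card_degreeLT, ← pow_add]
    congr 1; omega
  let emb : ∀ n, auxL K g n → (QuadraticAlgebra K[X] G B) := fun n p => ⟨p.1, p.2⟩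
  have hemb : ∀ n p, D (emb n p) < n := fun n p => (hD _ n).2 ⟨p.1.2, p.2.2⟩
  have hembinj : ∀ n, Function.Injective (emb n) := by
    rintro n ⟨p1, p2⟩ ⟨q1, q2⟩ h
    simp only [emb, QuadraticAlgebra.mk.injEq] at h
    exact Prod.ext (Subtype.ext h.1) (Subtype.ext h.2)
  -- strict degree additivity helper
  have hlt : ∀ (v : (QuadraticAlgebra K[X] G B)) (n k e: ℕ) (x : (QuadraticAlgebra K[X] G B)), D v < n → D x = e → 0 < k →
      D (v ^ k * x) < ((n - 1) * k + e + 1 : ℕ) := by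
    intro v n k e x hv hx hk
    rw [hDmul, hDpow, hx]
    by_cases h0 : D v = ⊥
    · rw [h0]
      have : k • (⊥ : WithBot ℕ) = ⊥ := by
        obtain ⟨k, rfl⟩ := Nat.exists_eq_succ_of_ne_zero hk.ne'
        rw [succ_nsmul]; simp
      rw [this]; simp
      exact WithBot.bot_lt_coe _
    · obtain ⟨z, hz⟩ := WithBot.ne_bot_iff_exists.1 h0
      rw [← hz] at hv ⊢
      have hv' : z < n := WithBot.coe_lt_coe.1 hv
      have : k • (z : WithBot ℕ) = ((k * z : ℕ) : WithBot ℕ) := by simp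
      erw [this]
      norm_cast
      have : k * z ≤ (n - 1) * k := by rw [mul_comm]; exact Nat.mul_le_mul_right _ (by omega)
      omega
  -- pigeonhole
  have hs'1 : 2 * g + 1 ≤ s' := by nlinarith
  set n := (s' - 1) * s + (s + 2 * g + 1) with hn
  have hnq : n = Fintype.card K + 2 * g + 1 := by
    rw [hn, hq, Nat.sub_mul]
    have : s ≤ s' * s := Nat.le_mul_of_pos_left _ (by positivity)
    have : s' * s = s * s' := mul_comm _ _
    omega
  let Φ : ((Fin c ⊕ Fin d) → auxL K g s') → (QuadraticAlgebra K[X] G B) := fun v => ∑ i, (emb s' (v i)) ^ s * f i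
  have hΦ : ∀ v, D (Φ v) < n := by
    intro v
    refine hDsum _ _ _ fun i _ => ?_
    refine (hlt _ _ _ _ _ (hemb s' (v i)) (hf i) hs0).trans_le ?_
    have := hW i
    norm_cast
    omega
  let Ψ : ((Fin c ⊕ Fin d) → auxL K g s') → auxL K g n := fun v =>
    (⟨(Φ v).re, ((hD _ _).1 (hΦ v)).1⟩, ⟨(Φ v).im, ((hD _ _).1 (hΦ v)).2⟩)
  have hcard : Nat.card (auxL K g n) < Nat.card ((Fin c ⊕ Fin d) → auxL K g s') := by
    rw [Nat.card_fun, hLcard _ (by omega), hLcard _ (by omega)]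
    simp only [Nat.card_eq_fintype_card, Fintype.card_sum, Fintype.card_fin]
    rw [← pow_mul, hcd]
    apply Nat.pow_lt_pow_right (Fintype.one_lt_card)
    rw [hnq, hq]
    obtain ⟨k, hk⟩ : ∃ k, s' = k + g := ⟨s' - g, by omega⟩
    have : s * s' + 2 * g + 1 - g = s * s' + g + 1 := by omega
    rw [this, hk, Nat.add_sub_cancel]
    rw [hk] at hss hb
    nlinarith
  have : ∀ n, Finite (auxL K g n) := fun n => inferInstance
  obtain ⟨u, u', hne, huu⟩ : ∃ u u', u ≠ u' ∧ Ψ u = Ψ u' := by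
    by_contra! hcon
    have : Function.Injective Ψ := fun x y hxy => by
      by_contra h; exact hcon x y h hxy
    exact absurd (Nat.card_le_card_of_injective Ψ this) (by omega)
  have huu' : Φ u = Φ u' := by
    simp only [Ψ, Prod.mk.injEq, Subtype.mk.injEq] at huu
    exact QuadraticAlgebra.ext huu.1 huu.2
  let v : Fin c ⊕ Fin d → (QuadraticAlgebra K[X] G B) := fun i => emb s' (u i) - emb s' (u' i)
  have hv : ∀ i, D (v i) < s' := by
    intro i
    have := hDsum (Finset.univ : Finset (Bool)) (fun x => if x then emb s' (u i) else - emb s' (u' i)) s'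
      (by
        intro x _
        cases x
        · simpa [D] using hemb s' (u' i)
        · simpa using hemb s' (u i))
    simpa [v, sub_eq_add_neg] using this
  have hv0 : ∑ i, v i ^ s * f i = 0 := by
    have : ∀ i, v i ^ s * f i = (emb s' (u i)) ^ s * f i - (emb s' (u' i)) ^ s * f i := by
      intro i
      rw [← sub_mul]; congr 1
      exact sub_pow_char_pow _ _ _
    rw [Finset.sum_congr rfl fun i _ => this i, Finset.sum_sub_distrib]
    exact sub_eq_zero.2 huu'
  have hvne : ∃ i, v i ≠ 0 := by
    by_contra! h
    exact hne (funext fun i => hembinj _ (sub_eq_zero.1 (h i)))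
  let H : (QuadraticAlgebra K[X] G B) := ∑ i, v i * f i ^ s'
  have hterm : ∀ i, D (v i * f i ^ s') < (s' * (W i + 1) : ℕ) := by
    intro i
    have := hlt (v i) s' 1 (s' * W i) (f i ^ s') (hv i) (by rw [hDpow, hf]; simp) one_pos
    rw [pow_one] at this
    refine this.trans_le ?_
    norm_cast
    rw [mul_add]; omega
  have hH : D H < (s' * (s + 2 * g + 1) : ℕ) := by
    refine hDsum _ _ _ fun i _ => (hterm i).trans_le ?_
    have := hW i
    exact_mod_cast Nat.mul_le_mul_left _ this
  have hHne : H ≠ 0 := by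
    intro h0
    obtain ⟨i, hi, himax⟩ := Finset.exists_max_image (Finset.univ.filter fun i => v i ≠ 0) W
      (by obtain ⟨i, hi⟩ := hvne; exact ⟨i, by simpa using hi⟩)
    have hi : v i ≠ 0 := by simpa using hi
    have h1 : v i * f i ^ s' = - ∑ j ∈ Finset.univ.erase i, v j * f j ^ s' := by
      rw [eq_neg_iff_add_eq_zero, Finset.add_sum_erase _ (fun j => v j * f j ^ s') (Finset.mem_univ i)]
      exact h0
    have h2 : D (∑ j ∈ Finset.univ.erase i, v j * f j ^ s') < (s' * W i : ℕ) := by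
      refine hDsum _ _ _ fun j hj => ?_
      by_cases hj0 : v j = 0
      · simp [hj0, D]
        exact WithBot.bot_lt_coe _
      refine (hterm j).trans_le ?_
      have h3 := himax j (by simpa using hj0)
      have h4 : W j ≠ W i := fun h => (Finset.ne_of_mem_erase hj) (auxW_inj _ _ _ h)
      exact_mod_cast Nat.mul_le_mul_left _ (show W j + 1 ≤ W i by omega)
    have h3 : D (v i * f i ^ s') < (s' * W i : ℕ) := by
      rw [h1, hDneg]; exact h2
    have h4 : 0 ≤ D (v i) := by
      by_contra h; exact hi (hD0 _ (not_le.1 h))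
    obtain ⟨z, hz⟩ := WithBot.ne_bot_iff_exists.1 (show D (v i) ≠ ⊥ from fun h => by simp [h] at h4)
    rw [hDmul, hDpow, hf, ← hz, nsmul_eq_mul] at h3
    have h5 : z + s' * W i < s' * W i := by
      apply WithBot.coe_lt_coe.1
      refine lt_of_eq_of_lt ?_ h3
      rw [WithBot.coe_add, WithBot.coe_mul]
      rfl
    omega
  -- vanishing
  have hev : ∀ y w (h : w * w = G.eval y + B.eval y * w), auxEv G B y w h H = 0 := by
    intro y w h
    have h1 : (auxEv G B y w h H) ^ s = 0 := by
      have h2 : H ^ s = ∑ i, v i ^ s * f i ^ (s * s') := by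
        simp only [H]
        rw [hs, sum_pow_char_pow]
        refine Finset.sum_congr rfl fun i _ => ?_
        rw [mul_pow, ← pow_mul, mul_comm s']
      rw [← map_pow, h2, map_sum]
      have h3 := congrArg (auxEv G B y w h) hv0
      rw [map_sum, map_zero] at h3
      rw [← h3]
      refine Finset.sum_congr rfl fun i _ => ?_
      rw [map_mul, map_mul, map_pow _ (f i), ← hq, FiniteField.pow_card]
    exact pow_eq_zero_iff hs0.ne' |>.1 h1
  have hzero : ∀ y ∈ S, H.re.eval y = 0 ∧ H.im.eval y = 0 := by
    intro y hy
    obtain ⟨hBy, w, hw⟩ := hS y hy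
    have e1 := hev y w hw
    have e2 := hev y (B.eval y - w) (by linear_combination hw)
    simp only [auxEv, RingHom.coe_mk, MonoidHom.coe_mk, OneHom.coe_mk] at e1 e2
    have e2c : (2 : K) = 0 := CharTwo.two_eq_zero
    have e3 : B.eval y * H.im.eval y = 0 := by
      linear_combination e1 + e2 - (H.re.eval y) * e2c
    have e4 := (mul_eq_zero.1 e3).resolve_left hBy
    rw [e4] at e1
    exact ⟨by simpa using e1, e4⟩
  have hcardS : ∀ p : K[X], p ≠ 0 → (∀ y ∈ S, p.eval y = 0) → S.card ≤ p.natDegree := by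
    intro p hp h
    exact Polynomial.card_le_degree_of_subset_roots (fun y hy => (mem_roots hp).2 (h y hy))
  have hfin := (hD _ _).1 hH
  rw [mem_degreeLT, mem_degreeLT] at hfin
  have hgoal : Fintype.card K + (2 * g + 1) * s' = s' * (s + 2 * g + 1) := by rw [hq]; ring
  rw [hgoal]
  by_cases hre : H.re = 0
  · have him : H.im ≠ 0 := fun h => hHne (QuadraticAlgebra.ext hre h)
    have h1 := hcardS _ him fun y hy => (hzero y hy).2
    have h2 := hfin.2
    rw [degree_eq_natDegree him] at h2
    norm_cast at h2
    omega
  · have h1 := hcardS _ hre fun y hy => (hzero y hy).1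
    have h2 := hfin.1
    rw [degree_eq_natDegree hre] at h2
    norm_cast at h2
    omega

lemma aux_AS (K : Type*) [Field K] [Fintype K] [CharP K 2] :
    ∃ δ : K, ∀ c : K, (∃ z : K, z ^ 2 + z = c) ∨ (∃ z : K, z ^ 2 + z = c + δ) := by
  classical
  let f : K →+ K :=
    { toFun := fun z => z ^ 2 + z
      map_zero' := by simp
      map_add' := fun x y => by
        have : (2 : K) = 0 := CharTwo.two_eq_zero
        linear_combination (x * y) * this }
  have hker : Nat.card f.ker = 2 := by
    have : (f.ker : Set K) = {0, 1} := by
      ext z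
      simp only [SetLike.mem_coe, AddMonoidHom.mem_ker, Set.mem_insert_iff, Set.mem_singleton_iff]
      change z ^ 2 + z = 0 ↔ _
      have h2 : (2 : K) = 0 := CharTwo.two_eq_zero
      constructor
      · intro h
        have : z * (z - 1) = 0 := by linear_combination h - z * h2
        rcases mul_eq_zero.1 this with h | h
        · exact Or.inl h
        · exact Or.inr (sub_eq_zero.1 h)
      · rintro (rfl | rfl)
        · simp
        · linear_combination h2
    have h3 : Nat.card f.ker = Set.ncard (f.ker : Set K) := rfl
    rw [h3, this, Set.ncard_pair zero_ne_one]
  have hidx : f.range.index = 2 := by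
    have h1 := AddSubgroup.card_mul_index f.ker
    have h2 := AddSubgroup.card_mul_index f.range
    rw [AddSubgroup.index_ker, hker] at h1
    have h3 : 0 < Nat.card f.range := Nat.card_pos
    rw [← h1, mul_comm 2] at h2
    exact Nat.eq_of_mul_eq_mul_left h3 h2
  obtain ⟨δ, hδ⟩ := AddSubgroup.index_eq_two_iff.1 hidx
  refine ⟨δ, fun c => ?_⟩
  rcases hδ c with h | h
  · obtain ⟨z, hz⟩ := h.1; exact Or.inr ⟨z, hz⟩
  · obtain ⟨z, hz⟩ := h.1; exact Or.inl ⟨z, hz⟩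

open Polynomial in
lemma aux_homog {K : Type*} [Field K] (P : K[X]) (n l : K[X]) (hn : n.natDegree ≤ 1)
    (hl : l.natDegree ≤ 1) :
    ∃ Q : K[X], Q.natDegree ≤ P.natDegree ∧ ∀ y, l.eval y ≠ 0 →
      Q.eval y = l.eval y ^ P.natDegree * P.eval (n.eval y / l.eval y) := by
  refine ⟨∑ k ∈ Finset.range (P.natDegree + 1), C (P.coeff k) * n ^ k * l ^ (P.natDegree - k), ?_, ?_⟩
  · refine natDegree_sum_le_of_forall_le _ _ fun k hk => ?_
    have hk : k ≤ P.natDegree := by simpa [Nat.lt_succ_iff] using hk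
    have h1 : (n ^ k).natDegree ≤ k := natDegree_pow_le.trans (by nlinarith)
    have h2 : (l ^ (P.natDegree - k)).natDegree ≤ P.natDegree - k :=
      natDegree_pow_le.trans (by nlinarith)
    refine natDegree_mul_le.trans ?_
    have h3 := natDegree_C_mul_le (P.coeff k) (n ^ k)
    omega
  · intro y hy
    rw [eval_finsetSum, eval_eq_sum_range (p := P), Finset.mul_sum]
    refine Finset.sum_congr rfl fun k hk => ?_
    have hk : k ≤ P.natDegree := by simpa [Nat.lt_succ_iff] using hk
    simp only [eval_mul, eval_C, eval_pow]
    rw [div_pow, pow_sub₀ _ hy hk]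
    field_simp

open Polynomial in
lemma aux_rational {K : Type*} [Field K] [CharP K 2] (r t : ℕ)
    (P : K[X]) (ht : P.natDegree = t) (ht1 : 1 ≤ t)
    (α β κ υ : Fin r → K)
    (hκ : ∀ i, κ i ≠ 0) (hnd : ∀ i, α i * υ i + β i * κ i ≠ 0)
    (j : Fin r) (hj : ∀ i, i ≠ j → υ j / κ j ≠ υ i / κ i) (θ : K) :
    ∃ B A : K[X], B.natDegree = (r - 1) * t ∧ A.natDegree = (r - 1) * t + t ∧
      ∀ x, (∀ i, x ≠ υ i / κ i) → B.eval (κ j * x + υ j)⁻¹ ≠ 0 ∧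
        A.eval (κ j * x + υ j)⁻¹ = B.eval (κ j * x + υ j)⁻¹ *
          ((∑ i, P.eval ((α i * x + β i) / (κ i * x + υ i))) + θ) := by
  classical
  have h2 : (2 : K) = 0 := CharTwo.two_eq_zero
  let l : Fin r → K[X] := fun i => C (κ i * υ j + υ i * κ j) * X + C (κ i)
  let n : Fin r → K[X] := fun i => C (α i * υ j + β i * κ j) * X + C (α i)
  have hc : ∀ i, i ≠ j → κ i * υ j + υ i * κ j ≠ 0 := by
    intro i hi h
    apply hj i hi
    rw [div_eq_div_iff (hκ j) (hκ i)]
    linear_combination h - (υ i * κ j) * h2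
  have hl1 : ∀ i, i ≠ j → (l i).natDegree = 1 := fun i hi => natDegree_linear (hc i hi)
  choose Q hQ1 hQ2 using fun i => aux_homog P (n i) (l i) natDegree_linear_le natDegree_linear_le
  rw [ht] at hQ1 hQ2
  let E := Finset.univ.erase j
  have hE : E.card = r - 1 := by simp [E]
  have hl0 : ∀ i ∈ E, l i ≠ 0 := by
    intro i hi h
    have := hl1 i (Finset.ne_of_mem_erase hi)
    rw [h] at this; simp at this
  let B : K[X] := ∏ i ∈ E, l i ^ t
  have hprod : ∀ T ⊆ E, (∏ i ∈ T, l i ^ t).natDegree = T.card * t := by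
    intro T hT
    rw [natDegree_prod _ _ fun i hi => pow_ne_zero _ (hl0 i (hT hi))]
    rw [Finset.sum_congr rfl (g := fun _ => t)]
    · simp
    · intro i hi
      rw [natDegree_pow, hl1 i (Finset.ne_of_mem_erase (hT hi)), mul_one]
  have hB : B.natDegree = (r - 1) * t := by rw [hprod E subset_rfl, hE]
  have hB0 : B ≠ 0 := Finset.prod_ne_zero_iff.2 fun i hi => pow_ne_zero _ (hl0 i hi)
  let Lj : K[X] := C ((α j * υ j + β j * κ j) / κ j) * X + C (α j / κ j)
  let Pj : K[X] := P.comp Lj + C θ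
  have hLj : Lj.natDegree = 1 := natDegree_linear (div_ne_zero (hnd j) (hκ j))
  have hPj : Pj.natDegree = t := by
    simp only [Pj]
    rw [natDegree_add_C, natDegree_comp, hLj, ht, mul_one]
  have hPj0 : Pj ≠ 0 := by intro h; rw [h] at hPj; simp at hPj; omega
  let Rm : K[X] := ∑ i ∈ E, Q i * ∏ k ∈ E.erase i, l k ^ t
  have hRm : Rm.natDegree ≤ (r - 1) * t := by
    refine natDegree_sum_le_of_forall_le _ _ fun i hi => ?_
    refine natDegree_mul_le.trans ?_
    rw [hprod _ (Finset.erase_subset _ _), Finset.card_erase_of_mem hi, hE]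
    have : 0 < E.card := Finset.card_pos.2 ⟨i, hi⟩
    obtain ⟨u, hu⟩ : ∃ u, r - 1 = u + 1 := ⟨r - 1 - 1, by omega⟩
    rw [hu, Nat.add_sub_cancel, add_mul, one_mul]
    have := hQ1 i
    omega
  have hBP : (B * Pj).natDegree = (r - 1) * t + t := by rw [natDegree_mul hB0 hPj0, hB, hPj]
  refine ⟨B, B * Pj + Rm, hB, ?_, ?_⟩
  · rw [natDegree_add_eq_left_of_natDegree_lt (by omega), hBP]
  intro x hx
  have hx' : ∀ i, κ i * x + υ i ≠ 0 := by
    intro i h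
    apply hx i
    rw [eq_div_iff (hκ i)]
    linear_combination h - υ i * h2
  set y := (κ j * x + υ j)⁻¹ with hy
  have hy1 : y * (κ j * x + υ j) = 1 := inv_mul_cancel₀ (hx' j)
  have hy0 : y ≠ 0 := inv_ne_zero (hx' j)
  have hle : ∀ i, (l i).eval y = κ j * y * (κ i * x + υ i) := by
    intro i
    simp only [l, eval_add, eval_mul, eval_C, eval_X]
    linear_combination (-κ i) * hy1 + κ i * υ j * y * h2
  have hne : ∀ i, (n i).eval y = κ j * y * (α i * x + β i) := by
    intro i
    simp only [n, eval_add, eval_mul, eval_C, eval_X]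
    linear_combination (-α i) * hy1 + α i * υ j * y * h2
  have hle0 : ∀ i, (l i).eval y ≠ 0 := fun i => by
    rw [hle]; exact mul_ne_zero (mul_ne_zero (hκ j) hy0) (hx' i)
  have hq : ∀ i, (n i).eval y / (l i).eval y = (α i * x + β i) / (κ i * x + υ i) := by
    intro i
    rw [hle, hne, mul_div_mul_left _ _ (mul_ne_zero (hκ j) hy0)]
  refine ⟨?_, ?_⟩
  · simp only [B, eval_prod, eval_pow]
    exact Finset.prod_ne_zero_iff.2 fun i _ => pow_ne_zero _ (hle0 i)
  have e1 : Pj.eval y = P.eval ((α j * x + β j) / (κ j * x + υ j)) + θ := by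
    simp only [Pj, eval_add, eval_comp, eval_C]
    congr 2
    rw [← hq j]
    simp only [Lj, n, l, eval_add, eval_mul, eval_C, eval_X]
    have : κ j * υ j + υ j * κ j = 0 := by linear_combination κ j * υ j * h2
    rw [this, zero_mul, zero_add]
    have := hκ j
    field_simp
  have e2 : Rm.eval y = B.eval y * ∑ i ∈ E, P.eval ((α i * x + β i) / (κ i * x + υ i)) := by
    simp only [Rm, B, eval_finsetSum, eval_mul, Finset.mul_sum]
    refine Finset.sum_congr rfl fun i hi => ?_
    rw [hQ2 i y (hle0 i), hq, ← Finset.mul_prod_erase E _ hi]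
    simp only [eval_mul, eval_pow]
    ring
  rw [eval_add, eval_mul, e1, e2, ← Finset.add_sum_erase _ _ (Finset.mem_univ j)]
  ring

lemma aux_upper {K : Type*} [Field K] [Fintype K] [DecidableEq K] [CharP K 2] (r t : ℕ)
    (P : Polynomial K) (ht : P.natDegree = t) (htodd : Odd t)
    (α β κ υ : Fin r → K)
    (hκ : ∀ i, κ i ≠ 0) (hnd : ∀ i, α i * υ i + β i * κ i ≠ 0)
    (j : Fin r) (hj : ∀ i, i ≠ j → υ j / κ j ≠ υ i / κ i) (θ : K) (a b : ℕ)
    (hq : Fintype.card K = 2 ^ a * 2 ^ b) (hab : a ≤ b) (hb : (r * t) ^ 2 < 2 ^ b)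
    (S : Finset K) (hS : ∀ x ∈ S, (∀ i, x ≠ υ i / κ i) ∧
      ∃ z : K, z ^ 2 + z = (∑ i, P.eval ((α i * x + β i) / (κ i * x + υ i))) + θ) :
    2 * S.card < Fintype.card K + (2 * (r * t) - 1) * 2 ^ b := by
  have h2 : (2 : K) = 0 := CharTwo.two_eq_zero
  obtain ⟨k, hk⟩ := htodd
  obtain ⟨B, A, hB, hA, hAB⟩ := aux_rational r t P ht (by omega) α β κ υ hκ hnd j hj θ
  obtain ⟨r, rfl⟩ : ∃ r', r = r' + 1 := ⟨r - 1, by have := j.2; omega⟩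
  rw [Nat.add_sub_cancel] at hB hA
  have hA0 : A ≠ 0 := by rintro rfl; simp at hA; omega
  have hrt : (r + 1) * t = r * t + t := by ring
  by_cases hne : S = ∅
  · subst hne
    simp
    exact Or.inl Fintype.card_pos
  obtain ⟨x₀, hx₀⟩ := Finset.nonempty_iff_ne_empty.2 hne
  have hB0 : B ≠ 0 := by
    rintro rfl
    exact (hAB x₀ (hS x₀ hx₀).1).1 (by simp)
  have hinj : Function.Injective fun x => (κ j * x + υ j)⁻¹ := by
    intro x y h
    have := inv_injective h
    simpa [hκ j] using this
  have := aux_core (B * A) B (r * t + k) a b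
    (by rw [Polynomial.natDegree_mul hB0 hA0, hB, hA]; omega) (by omega) hq hab
    (lt_of_le_of_lt (Nat.pow_le_pow_left (by omega) 2) hb)
    (S.image fun x => (κ j * x + υ j)⁻¹)
    (by
      intro y hy
      obtain ⟨x, hx, rfl⟩ := Finset.mem_image.1 hy
      obtain ⟨h1, z, hz⟩ := hS x hx
      obtain ⟨h3, h4⟩ := hAB x h1
      refine ⟨h3, Polynomial.eval (κ j * x + υ j)⁻¹ B * z, ?_⟩
      rw [Polynomial.eval_mul, h4, ← hz]
      linear_combination (-(Polynomial.eval (κ j * x + υ j)⁻¹ B) ^ 2 * z) * h2)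
  rw [Finset.card_image_of_injective _ hinj] at this
  refine this.trans_le ?_
  gcongr
  omega

lemma aux_lower {K : Type*} [Field K] [Fintype K] [CharP K 2] (r t : ℕ)
    (P : Polynomial K) (ht : P.natDegree = t) (htodd : Odd t)
    (α β κ υ : Fin r → K)
    (hκ : ∀ i, κ i ≠ 0) (hnd : ∀ i, α i * υ i + β i * κ i ≠ 0)
    (j : Fin r) (hj : ∀ i, i ≠ j → υ j / κ j ≠ υ i / κ i) (θ : K) (a b : ℕ)
    (hq : Fintype.card K = 2 ^ a * 2 ^ b) (hab : a ≤ b) (hb : (r * t) ^ 2 < 2 ^ b) :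
    Fintype.card K ≤ Nat.card {p : K × K //
      (∀ i, p.1 ≠ υ i / κ i) ∧
      p.2 ^ 2 + p.2 = (∑ i, P.eval ((α i * p.1 + β i) / (κ i * p.1 + υ i))) + θ} +
      2 * r + (2 * (r * t) - 1) * 2 ^ b := by
  classical
  have h2 : (2 : K) = 0 := CharTwo.two_eq_zero
  obtain ⟨δ, hδ⟩ := aux_AS K
  let c : K → K := fun x => (∑ i, P.eval ((α i * x + β i) / (κ i * x + υ i))) + θ
  let Y : Finset K := Finset.univ.filter fun x => ∀ i, x ≠ υ i / κ i
  let T := Y.filter fun x => ∃ z : K, z ^ 2 + z = c x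
  let S := Y.filter fun x => ¬ ∃ z : K, z ^ 2 + z = c x
  have hTS : T.card + S.card = Y.card := Finset.card_filter_add_card_filter_not _
  have hY : Fintype.card K ≤ Y.card + r := by
    have h1 : (Finset.univ : Finset K) ⊆ Y ∪ Finset.univ.image (fun i => υ i / κ i) := by
      intro x _
      simp only [Y, Finset.mem_union, Finset.mem_filter, Finset.mem_univ, true_and, Finset.mem_image]
      by_cases h : ∀ i, x ≠ υ i / κ i
      · exact Or.inl h
      · push Not at h
        obtain ⟨i, hi⟩ := h
        exact Or.inr ⟨i, hi.symm⟩
    have h3 := (Finset.card_le_card h1).trans (Finset.card_union_le _ _)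
    have h4 : (Finset.univ.image (fun i => υ i / κ i)).card ≤ r :=
      Finset.card_image_le.trans (by simp)
    rw [Finset.card_univ] at h3
    omega
  have hS := aux_upper r t P ht htodd α β κ υ hκ hnd j hj (θ + δ) a b hq hab hb S (by
    intro x hx
    obtain ⟨h1, h3⟩ := Finset.mem_filter.1 hx
    refine ⟨(Finset.mem_filter.1 h1).2, ?_⟩
    obtain ⟨z, hz⟩ := (hδ (c x)).resolve_left h3
    exact ⟨z, by rw [hz]; simp only [c]; ring⟩)
  have hT : 2 * T.card ≤ Nat.card {p : K × K //
      (∀ i, p.1 ≠ υ i / κ i) ∧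
      p.2 ^ 2 + p.2 = (∑ i, P.eval ((α i * p.1 + β i) / (κ i * p.1 + υ i))) + θ} := by
    have hz : ∀ x : T, ∃ z : K, z ^ 2 + z = c x := fun x => (Finset.mem_filter.1 x.2).2
    choose z hz using hz
    let F : Bool × T → {p : K × K //
      (∀ i, p.1 ≠ υ i / κ i) ∧
      p.2 ^ 2 + p.2 = (∑ i, P.eval ((α i * p.1 + β i) / (κ i * p.1 + υ i))) + θ} := fun p =>
      ⟨(p.2, z p.2 + if p.1 then 1 else 0),
        (Finset.mem_filter.1 (Finset.mem_filter.1 p.2.2).1).2, by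
          have := hz p.2
          simp only [c] at this
          rw [← this]
          by_cases h : p.1
          · simp only [h, if_true]; linear_combination (z p.2 + 1) * h2
          · simp [h]⟩
    have hF : Function.Injective F := by
      rintro ⟨e, x⟩ ⟨e', x'⟩ h
      simp only [F, Subtype.mk.injEq, Prod.mk.injEq] at h
      obtain ⟨h1, h3⟩ := h
      have h1 := Subtype.ext h1
      subst h1
      cases e <;> cases e' <;> simp at h3 ⊢
    have := Nat.card_le_card_of_injective F hF
    simpa using this
  omega

/-- Lemma 4.6: the number `N` of affine rational points `(x,z)` with
`z² + z = Σᵢ P((αᵢx+βᵢ)/(κᵢx+υᵢ)) + θ` and `x ≠ υᵢ/κᵢ` satisfies the Hasse–Weil type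
bound `N ≥ 2^m − 1 − (rt+1)rt·2^{m/2} − r(rt+2)`; in particular, if `m ≥ 4` and
`rt ≤ 2^{m/4} − 1`, then `N > 0`. -/
theorem curve_affine_point_count
    (m r : ℕ) (hm : 1 ≤ m) (hr : 1 ≤ r)
    (P : Polynomial (GaloisField 2 m)) (t : ℕ) (ht : P.natDegree = t) (htodd : Odd t)
    (α β κ υ : Fin r → GaloisField 2 m)
    (hκ : ∀ i, κ i ≠ 0) (hnd : ∀ i, α i * υ i + β i * κ i ≠ 0)
    (hj : ∃ j, ∀ i, i ≠ j → υ j / κ j ≠ υ i / κ i)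
    (θ : GaloisField 2 m) (N : ℕ)
    (hN : N = Nat.card {p : GaloisField 2 m × GaloisField 2 m //
      (∀ i, p.1 ≠ υ i / κ i) ∧
      p.2 ^ 2 + p.2 = (∑ i, P.eval ((α i * p.1 + β i) / (κ i * p.1 + υ i))) + θ}) :
    (N : ℝ) ≥ (2 : ℝ) ^ m - 1 -
        ((r * t + 1 : ℕ) : ℝ) * ((r * t : ℕ) : ℝ) * (2 : ℝ) ^ ((m : ℝ) / 2) -
        ((r * (r * t + 2) : ℕ) : ℝ) ∧
    (4 ≤ m → ((r * t : ℕ) : ℝ) ≤ (2 : ℝ) ^ ((m : ℝ) / 4) - 1 → 0 < N) := by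
  obtain ⟨j, hj⟩ := hj
  letI : Fintype (GaloisField 2 m) := Fintype.ofFinite _
  have hcard : Fintype.card (GaloisField 2 m) = 2 ^ m := by
    rw [← Nat.card_eq_fintype_card, GaloisField.card 2 m (by omega)]
  have ht1 : 1 ≤ t := by obtain ⟨k, hk⟩ := htodd; omega
  have hD1 : 1 ≤ r * t := Nat.mul_pos hr ht1
  have hrD : r ≤ r * t := Nat.le_mul_of_pos_right _ ht1
  set σ : ℝ := (2 : ℝ) ^ ((m : ℝ) / 2) with hσ
  have hσ0 : 0 < σ := by positivity
  have hσ2 : σ ^ 2 = 2 ^ m := by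
    rw [hσ, ← Real.rpow_natCast, ← Real.rpow_mul (by norm_num), ← Real.rpow_natCast]
    congr 1; push_cast; ring
  have hN0 : (0 : ℝ) ≤ N := Nat.cast_nonneg _
  have hr1 : (1 : ℝ) ≤ r := by exact_mod_cast hr
  generalize hDd : r * t = D at *
  have hD1' : (1 : ℝ) ≤ D := by exact_mod_cast hD1
  have hrD' : (r : ℝ) ≤ D := by exact_mod_cast hrD
  have main : (N : ℝ) ≥ (2 : ℝ) ^ m - 1 - ((D + 1 : ℕ) : ℝ) * (D : ℝ) * σ
      - ((r * (D + 2) : ℕ) : ℝ) := by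
    push_cast
    rw [← hσ2]
    rcases le_or_gt σ ((D + 1) * D) with h | h
    · have h1 : σ ^ 2 ≤ (D + 1) * D * σ := by nlinarith
      have h3 : 0 ≤ (r : ℝ) * (D + 2) := by positivity
      linarith
    · have hab : m = m / 2 + (m + 1) / 2 := by omega
      set b := (m + 1) / 2 with hb
      have hb1 : σ ≤ 2 ^ b := by
        refine le_of_sq_le_sq ?_ (by positivity)
        rw [hσ2, ← pow_mul]
        exact pow_le_pow_right₀ (by norm_num) (by omega)
      have hb2 : (2 : ℝ) ^ b ≤ 3 / 2 * σ := by
        refine le_of_sq_le_sq ?_ (by positivity)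
        have : ((2 : ℝ) ^ b) ^ 2 ≤ 2 * 2 ^ m := by
          rw [← pow_mul, ← pow_succ']
          exact pow_le_pow_right₀ (by norm_num) (by omega)
        rw [mul_pow, hσ2]
        have h0 : (0 : ℝ) < 2 ^ m := by positivity
        linarith
      have hb3 : (r * t) ^ 2 < 2 ^ b := by
        rw [hDd]
        have : ((D : ℝ)) ^ 2 < 2 ^ b := by nlinarith
        exact_mod_cast this
      have := aux_lower r t P ht htodd α β κ υ hκ hnd j hj θ (m / 2) b
        (by rw [hcard, ← pow_add, ← hab]) (by omega) hb3
      rw [← hN, hcard, hDd] at this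
      have h5 : (2 : ℝ) ^ m ≤ N + 2 * r + (2 * D - 1) * 2 ^ b := by
        have h6 : ((2 * D - 1 : ℕ) : ℝ) = 2 * D - 1 := by
          rw [Nat.cast_sub (by omega)]; push_cast; ring
        rw [← h6]
        exact_mod_cast this
      rw [← hσ2] at h5
      have h7 : (2 * (D : ℝ) - 1) * 2 ^ b ≤ (2 * D - 1) * (3 / 2 * σ) :=
        mul_le_mul_of_nonneg_left hb2 (by linarith)
      have h8 : (2 * (D : ℝ) - 1) * (3 / 2) ≤ (D + 1) * D := by nlinarith [sq_nonneg ((D : ℝ) - 1)]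
      have h9 : (2 * (D : ℝ) - 1) * (3 / 2) * σ ≤ (D + 1) * D * σ :=
        mul_le_mul_of_nonneg_right h8 hσ0.le
      have h10 : 0 ≤ (r : ℝ) * D := by positivity
      linarith
  refine ⟨main, fun hm4 hD => ?_⟩
  set u : ℝ := (2 : ℝ) ^ ((m : ℝ) / 4) with hu
  have hu2 : u ^ 2 = σ := by
    rw [hu, hσ, ← Real.rpow_natCast, ← Real.rpow_mul (by norm_num)]
    congr 1; push_cast; ring
  have hu1 : 2 ≤ u := by linarith
  rw [← hσ2, ← hu2] at main
  push_cast at main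
  have h1 : ((D : ℝ) + 1) * D ≤ u * (u - 1) :=
    mul_le_mul (by linarith) hD (by linarith) (by linarith)
  have h3 : ((D : ℝ) + 1) * D * u ^ 2 ≤ u * (u - 1) * u ^ 2 :=
    mul_le_mul_of_nonneg_right h1 (by positivity)
  have h4 : (r : ℝ) * (D + 2) ≤ (u - 1) * (u + 1) :=
    mul_le_mul (by linarith) (by linarith) (by linarith) (by linarith)
  have h5 : 0 < u ^ 2 * (u - 1) := mul_pos (by positivity) (by linarith)
  have : (0 : ℝ) < N := by nlinarith
  exact_mod_cast this
end

section
/- Let m, k be positive integers such that k divides m and gcd(2^m − 1, 2^k + 1) = 1, and set e = 2^k + 1. Identify F_{2^k} with the subfield {u ∈ F_{2^m} : u^{2^k} = u} of F_{2^m}. Let P : F_{2^k} → F_{2^k} be a bijection, and let α, β, γ be nonzero elements of F_{2^k} with α + β + γ ≠ 0. Define f : F_{2^m} × F_{2^m} × F_2 × F_2 → F_2 by f(x, y, z₁, z₂) = Tr_1^k(((1 + z₁ + z₂)α + z₂β + z₁γ) · P(Tr_k^m(y · (x⁻¹)^e))) + z₁z₂, where z₁, z₂ ∈ F_2 = {0,1}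 are regarded as elements of F_{2^k}. Then f is a bent function: for every nonzero (a, b, c₁, c₂) ∈ F_{2^m} × F_{2^m} × F_2 × F_2, the derivative (x,y,z₁,z₂) ↦ f(x+a, y+b, z₁+c₁, z₂+c₂) + f(x,y,z₁,z₂) takes each of the values 0 and 1 exactly 2^{2m+1} times. -/
open scoped Classical

/-- The relative trace `Tr_k^m : F_{2^m} → F_{2^k}`, with `F_{2^k}` identified with the
subfield `{u : u^{2^k} = u}` of `F_{2^m}`. -/
noncomputable def TrRel (k m : ℕ) (x : GaloisField 2 m) : GaloisField 2 m :=
  ∑ i ∈ Finset.range (m / k), x ^ 2 ^ (k * i)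

/-- The absolute trace `Tr_1^k` of the subfield `F_{2^k} = {u : u^{2^k} = u}` of `F_{2^m}`,
with values in `F₂ = ZMod 2`: for `u` in the subfield, `∑_{i<k} u^{2^i}` lies in
`{0, 1} ⊆ F_{2^m}`, and the value is `0` or `1` accordingly. -/
noncomputable def TrSub (k m : ℕ) (u : GaloisField 2 m) : ZMod 2 :=
  if (∑ i ∈ Finset.range k, u ^ 2 ^ i) = 0 then 0 else 1


noncomputable def sg (z : ZMod 2) : ℤ := if z = 0 then 1 else -1

lemma zc (z : ZMod 2) : z = 0 ∨ z = 1 := by revert z; decide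

lemma sg_add (a b : ZMod 2) : sg (a + b) = sg a * sg b := by
  rcases zc a with rfl | rfl <;> rcases zc b with rfl | rfl <;> simp [sg, show (1:ZMod 2) + 1 = 0 from rfl]

lemma sg_zero : sg 0 = 1 := by simp [sg]
lemma sg_ne {a : ZMod 2} (h : a ≠ 0) : sg a = -1 := by simp [sg, h]

lemma sum_sg {G : Type*} [AddCommGroup G] [Fintype G] (φ : G →+ ZMod 2) (g : G) (h : φ g ≠ 0) :
    ∑ x, sg (φ x) = 0 := by
  have h1 : ∑ x, sg (φ (x + g)) = ∑ x, sg (φ x) :=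
    Fintype.sum_equiv (Equiv.addRight g) _ _ (fun x => rfl)
  have h2 : ∑ x, sg (φ (x + g)) = - ∑ x, sg (φ x) := by
    rw [← Finset.sum_neg_distrib]
    refine Finset.sum_congr rfl fun x _ => ?_
    rw [map_add, sg_add, sg_ne h]; ring
  omega

lemma walsh {K : Type*} [Field K] [Fintype K] [CharP K 2] (S : Subfield K)
    (τ : S →+ ZMod 2) (R : K →ₗ[S] S) (hn : ∃ x, τ (R x) ≠ 0)
    (p : S ≃ S) (e : ℕ) (hinj : Function.Injective fun x : K => x ^ e)
    (hS : ∀ s : S, (s : K) ^ e = (s : K) ^ 2) (hτ : ∀ s : S, τ (s ^ 2) = τ s)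
    (l : S) (hl : l ≠ 0) (u v V : K) (hV : V ^ e = v⁻¹) :
    ∑ x : K, ∑ y : K, sg (τ (l * p (R (y * (x⁻¹) ^ e)))) * sg (τ (R (u * x))) * sg (τ (R (v * y)))
      = Fintype.card K * sg (τ (l * p (R (u * V) ^ 2))) := by
  obtain ⟨x0, hx0⟩ := hn
  have orthS : ∀ c : S, ∑ t : S, sg (τ (t * c)) = if c = 0 then (Fintype.card S : ℤ) else 0 := by
    intro c
    split_ifs with hc
    · simp [hc, sg_zero]
    · exact sum_sg (τ.comp (AddMonoidHom.mulRight c)) (R x0 * c⁻¹) (by simpa [hc] using hx0)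
  have orthK : ∀ c : K, ∑ t : K, sg (τ (R (t * c))) = if c = 0 then (Fintype.card K : ℤ) else 0 := by
    intro c
    split_ifs with hc
    · simp [hc, sg_zero]
    · exact sum_sg ((τ.comp R.toAddMonoidHom).comp (AddMonoidHom.mulRight c)) (x0 * c⁻¹)
        (by simpa [hc] using hx0)
  set g : S → ℤ := fun t => sg (τ (l * p t)) with hg
  set G : S → ℤ := fun s => ∑ t, g t * sg (τ (t * s)) with hG
  have hG0 : G 0 = 0 := by
    have : G 0 = ∑ t, sg (τ (l * p t)) := by simp [hG, hg, sg_zero]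
    rw [this, Equiv.sum_comp p (fun t => sg (τ (l * t)))]
    simp_rw [mul_comm l]
    rw [orthS, if_neg hl]
  have hinv : ∀ t', ∑ s, G s * sg (τ (s * t')) = Fintype.card S * g t' := by
    intro t'
    have : ∀ s t : S, g t * sg (τ (t * s)) * sg (τ (s * t')) = g t * sg (τ (s * (t + t'))) := by
      intro s t
      rw [mul_assoc, ← sg_add, ← map_add]; congr 3; ring
    simp only [hG, Finset.sum_mul, this]
    rw [Finset.sum_comm]
    simp_rw [← Finset.mul_sum, orthS]
    have h2 : ∀ t : S, t + t' = 0 ↔ t = t' := fun t => CharTwo.add_eq_zero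
    simp [h2, mul_comm]
  have hcS : (Fintype.card S : ℤ) ≠ 0 := by exact_mod_cast Fintype.card_ne_zero
  apply mul_left_cancel₀ hcS
  have e1 : ∀ s : S, G s * ∑ x : K, sg (τ (R (u * x))) *
      (if (s:K) * (x⁻¹) ^ e + v = 0 then (Fintype.card K : ℤ) else 0) =
      Fintype.card K * (G s * sg (τ (s * R (u * V) ^ 2))) := by
    intro s
    by_cases hs : s = 0
    · simp [hs, hG0]
    obtain ⟨r, hr⟩ : ∃ r : S, s = r ^ 2 := by
      obtain ⟨r, hr⟩ := FiniteField.isSquare_of_char_two (F := S) (ringChar.eq_iff.2 inferInstance) s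
      exact ⟨r, by rw [hr, sq]⟩
    have hr0 : (r : K) ≠ 0 := by
      intro h
      apply hs
      have : r = 0 := by exact_mod_cast h
      simp [hr, this]
    have key : ∀ x : K, (s:K) * (x⁻¹) ^ e + v = 0 ↔ x = r * V := by
      intro x
      rw [CharTwo.add_eq_zero]
      have h1 : (x = r * V) ↔ x ^ e = (r * V) ^ e := ⟨fun h => by rw [h], fun h => hinj h⟩
      rw [h1, mul_pow, hS, hV, hr, inv_pow]
      push_cast
      constructor
      · intro h
        rw [← h]; field_simp
      · intro h
        rw [h]; field_simp
    simp only [key]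
    rw [show R (u * V) ^ 2 = R (u*V) ^ 2 from rfl, hr, ← mul_pow, hτ]
    have h3 : R (u * (r * V)) = r * R (u * V) := by
      have := R.map_smul r (u * V)
      rw [smul_eq_mul] at this
      rw [← this]; congr 1
      rw [Subfield.smul_def, smul_eq_mul]; ring
    simp [h3]
    ring
  have e2 := Finset.sum_congr (s₁ := (Finset.univ : Finset S)) rfl fun s _ => e1 s
  rw [← Finset.mul_sum, hinv] at e2
  rw [mul_left_comm, ← e2]
  have e3 : ∀ x y : K, (Fintype.card S : ℤ) * (g (R (y * (x⁻¹) ^ e)) * sg (τ (R (u * x))) * sg (τ (R (v * y)))) =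
      ∑ s : S, G s * (sg (τ (R (u * x))) * sg (τ (R (y * (s * (x⁻¹) ^ e + v))))) := by
    intro x y
    rw [mul_assoc (g _), ← mul_assoc, ← hinv, Finset.sum_mul]
    refine Finset.sum_congr rfl fun s _ => ?_
    have h4 : R (y * (s * (x⁻¹) ^ e + v)) = s * R (y * (x⁻¹) ^ e) + R (v * y) := by
      have := R.map_smul s (y * (x⁻¹)^e)
      rw [smul_eq_mul] at this
      rw [← this, ← map_add]; congr 1
      rw [Subfield.smul_def, smul_eq_mul]; ring
    rw [h4, map_add, sg_add]; ring
  change (Fintype.card S : ℤ) * ∑ x : K, ∑ y : K, g (R (y * (x⁻¹) ^ e)) * sg (τ (R (u * x))) * sg (τ (R (v * y))) = _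
  simp_rw [Finset.mul_sum, e3]
  calc _ = ∑ x : K, ∑ s : S, ∑ y : K, G s * (sg (τ (R (u * x))) * sg (τ (R (y * (s * (x⁻¹) ^ e + v))))) :=
        Finset.sum_congr rfl fun x _ => Finset.sum_comm
    _ = ∑ s : S, ∑ x : K, ∑ y : K, G s * (sg (τ (R (u * x))) * sg (τ (R (y * (s * (x⁻¹) ^ e + v))))) :=
        Finset.sum_comm
    _ = _ := by
        refine Finset.sum_congr rfl fun s _ => Finset.sum_congr rfl fun x _ => ?_
        rw [← Finset.mul_sum, ← Finset.mul_sum, orthK]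

/-- flat spectrum gives balanced derivatives -/
lemma balanced {G : Type*} [AddCommGroup G] [Fintype G] (B : G →+ G →+ ZMod 2)
    (hB : ∀ d, d ≠ 0 → ∃ u, B u d ≠ 0) (h2 : ∀ d : G, d + d = 0) (f : G → ZMod 2)
    (hW : ∀ u, (∑ p, sg (f p) * sg (B u p)) ^ 2 = (Fintype.card G : ℤ))
    (d : G) (hd : d ≠ 0) (c : ZMod 2) :
    2 * Nat.card {p : G // f (p + d) + f p = c} = Fintype.card G := by
  have orth : ∀ d : G, ∑ u, sg (B u d) = if d = 0 then (Fintype.card G : ℤ) else 0 := by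
    intro d
    split_ifs with h
    · simp [h, sg_zero]
    · obtain ⟨u, hu⟩ := hB d h
      exact sum_sg (B.flip d) u (by simpa using hu)
  have hc0 : (Fintype.card G : ℤ) ≠ 0 := by exact_mod_cast Fintype.card_ne_zero
  have hz : ∑ p, sg (f (p + d) + f p) = 0 := by
    apply mul_left_cancel₀ hc0
    have l1 : ∑ u, (∑ p, sg (f p) * sg (B u p)) ^ 2 * sg (B u d) = 0 := by
      simp_rw [hW]
      rw [← Finset.mul_sum, orth, if_neg hd, mul_zero]
    have l2 : ∀ u, (∑ p, sg (f p) * sg (B u p)) ^ 2 * sg (B u d) =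
        ∑ p, ∑ q, sg (f p) * sg (f q) * sg (B u (q + (p + d))) := by
      intro u
      rw [sq, Finset.sum_mul_sum, Finset.sum_mul]
      refine Finset.sum_congr rfl fun p _ => ?_
      rw [Finset.sum_mul]
      refine Finset.sum_congr rfl fun q _ => ?_
      rw [map_add, map_add, sg_add, sg_add]; ring
    simp_rw [l2] at l1
    rw [Finset.sum_comm] at l1
    rw [mul_zero, ← l1, Finset.mul_sum]
    refine Finset.sum_congr rfl fun p _ => ?_
    rw [Finset.sum_comm]
    simp_rw [← Finset.mul_sum, orth]
    have h3 : ∀ q, q + (p + d) = 0 ↔ q = p + d := by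
      intro q
      rw [add_eq_zero_iff_eq_neg, ← eq_neg_of_add_eq_zero_left (h2 (p + d))]
    simp [h3, sg_add]
    ring
  have hs : ∀ z : ZMod 2, sg z = sg c * (2 * (if z = c then 1 else 0) - 1) := by
    intro z
    rcases zc z with rfl | rfl <;> rcases zc c with rfl | rfl <;> simp [sg]
  rw [Finset.sum_congr rfl fun p _ => hs _] at hz
  rw [← Finset.mul_sum] at hz
  have hsc : sg c ≠ 0 := by unfold sg; split_ifs <;> simp
  have := (mul_eq_zero.1 hz).resolve_left hsc
  rw [Finset.sum_sub_distrib, ← Finset.mul_sum] at this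
  simp at this
  rw [Nat.card_eq_fintype_card, Fintype.card_subtype]
  have h5 : (2 * (Finset.univ.filter fun p => f (p + d) + f p = c).card : ℤ) = Fintype.card G := by
    linarith
  exact_mod_cast h5

lemma pow_inj_of_gcd (m e : ℕ) (hm : 0 < m) (hg : Nat.gcd (2 ^ m - 1) e = 1) (he : e ≠ 0) :
    Function.Injective fun x : GaloisField 2 m => x ^ e := by
  letI := Fintype.ofFinite (GaloisField 2 m)
  have hcard : Fintype.card (GaloisField 2 m) = 2 ^ m := by
    rw [← Nat.card_eq_fintype_card, GaloisField.card 2 m hm.ne']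
  intro x y h
  simp only at h
  by_cases hy : y = 0
  · subst hy
    rw [zero_pow he] at h
    exact pow_eq_zero_iff he |>.1 h
  have hx : x ≠ 0 := by
    rintro rfl
    rw [zero_pow he] at h
    exact hy (pow_eq_zero_iff he |>.1 h.symm)
  have h1 : (x / y) ^ e = 1 := by
    rw [div_pow, h, div_self (pow_ne_zero _ hy)]
  have h2 : (x / y) ^ (2 ^ m - 1) = 1 := by
    rw [← hcard]
    exact FiniteField.pow_card_sub_one_eq_one _ (div_ne_zero hx hy)
  have h3 := Nat.dvd_gcd (orderOf_dvd_of_pow_eq_one h2) (orderOf_dvd_of_pow_eq_one h1)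
  rw [hg, Nat.dvd_one, orderOf_eq_one_iff] at h3
  exact (div_eq_one_iff_eq hy).1 h3

lemma pow_two_pow_m (m : ℕ) (hm : 0 < m) (x : GaloisField 2 m) : x ^ 2 ^ m = x := by
  letI := Fintype.ofFinite (GaloisField 2 m)
  have hcard : Fintype.card (GaloisField 2 m) = 2 ^ m := by
    rw [← Nat.card_eq_fintype_card, GaloisField.card 2 m hm.ne']
  rw [← hcard, FiniteField.pow_card]

lemma TrRel_mem (k m : ℕ) (hm : 0 < m) (hkm : k ∣ m) (x : GaloisField 2 m) :
    TrRel k m x ^ 2 ^ k = TrRel k m x := by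
  unfold TrRel
  rw [sum_pow_char_pow]
  have h : ∀ i, (x ^ 2 ^ (k * i)) ^ 2 ^ k = x ^ 2 ^ (k * (i + 1)) := by
    intro i
    rw [← pow_mul, ← pow_add]; congr 2
  simp_rw [h]
  have h1 := Finset.sum_range_succ (fun i => x ^ 2 ^ (k * i)) (m / k)
  have h2 := Finset.sum_range_succ' (fun i => x ^ 2 ^ (k * i)) (m / k)
  rw [Nat.mul_div_cancel' hkm, pow_two_pow_m m hm] at h1
  rw [mul_zero, pow_zero, pow_one, h1] at h2
  exact (add_right_cancel h2).symm

lemma algMap_TrSub (k m : ℕ) (u : GaloisField 2 m) (hu : u ^ 2 ^ k = u) :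
    algebraMap (ZMod 2) (GaloisField 2 m) (TrSub k m u) = ∑ i ∈ Finset.range k, u ^ 2 ^ i := by
  have h : (∑ i ∈ Finset.range k, u ^ 2 ^ i) ^ 2 = ∑ i ∈ Finset.range k, u ^ 2 ^ i := by
    rw [sum_pow_char 2]
    simp_rw [← pow_mul, ← pow_succ]
    have h1 := Finset.sum_range_succ (fun i => u ^ 2 ^ i) k
    have h2 := Finset.sum_range_succ' (fun i => u ^ 2 ^ i) k
    rw [hu] at h1
    rw [pow_zero, pow_one, h1] at h2
    exact (add_right_cancel h2).symm
  unfold TrSub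
  split_ifs with h0
  · rw [h0, map_zero]
  · rw [map_one]
    rw [sq] at h
    exact (mul_left_cancel₀ h0 (by rw [h, mul_one])).symm

lemma sum_range_mul' {M : Type*} [AddCommMonoid M] (F : ℕ → M) (k n : ℕ) :
    ∑ i ∈ Finset.range (k * n), F i = ∑ j ∈ Finset.range n, ∑ i ∈ Finset.range k, F (k * j + i) := by
  induction n with
  | zero => simp
  | succ n ih => rw [mul_add, mul_one, Finset.sum_range_add, ih, Finset.sum_range_succ]

lemma TrSub_TrRel (k m : ℕ) (hm : 0 < m) (hkm : k ∣ m) (x : GaloisField 2 m) :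
    TrSub k m (TrRel k m x) = Algebra.trace (ZMod 2) (GaloisField 2 m) x := by
  apply (algebraMap (ZMod 2) (GaloisField 2 m)).injective
  rw [algMap_TrSub k m _ (TrRel_mem k m hm hkm x), FiniteField.algebraMap_trace_eq_sum_pow,
    GaloisField.finrank 2 hm.ne', Nat.card_zmod]
  have hr := sum_range_mul' (fun i => x ^ 2 ^ i) k (m / k)
  rw [Nat.mul_div_cancel' hkm] at hr
  rw [hr, Finset.sum_comm]
  refine Finset.sum_congr rfl fun i _ => ?_
  unfold TrRel
  rw [sum_pow_char_pow]
  refine Finset.sum_congr rfl fun j _ => ?_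
  rw [← pow_mul, ← pow_add]

noncomputable def SF (k m : ℕ) : Subfield (GaloisField 2 m) :=
  (iterateFrobenius (GaloisField 2 m) 2 k).eqLocusField (RingHom.id _)

lemma mem_SF {k m : ℕ} {x : GaloisField 2 m} : x ∈ SF k m ↔ x ^ 2 ^ k = x := Iff.rfl

noncomputable def tauHom (k m : ℕ) : SF k m →+ ZMod 2 :=
  AddMonoidHom.mk' (fun u => TrSub k m u) (by
    intro a b
    apply (algebraMap (ZMod 2) (GaloisField 2 m)).injective
    rw [map_add, algMap_TrSub k m _ (mem_SF.1 a.2), algMap_TrSub k m _ (mem_SF.1 b.2),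
      algMap_TrSub k m _ (mem_SF.1 (a + b).2), ← Finset.sum_add_distrib]
    refine Finset.sum_congr rfl fun i _ => ?_
    push_cast
    rw [add_pow_char_pow])

noncomputable def RHom (k m : ℕ) (hm : 0 < m) (hkm : k ∣ m) : GaloisField 2 m →ₗ[SF k m] SF k m where
  toFun x := ⟨TrRel k m x, mem_SF.2 (TrRel_mem k m hm hkm x)⟩
  map_add' x y := by
    ext
    simp [TrRel, add_pow_char_pow, Finset.sum_add_distrib]
  map_smul' s x := by
    ext
    simp only [TrRel, RingHom.id_apply, Subfield.smul_def, smul_eq_mul, Subfield.coe_mul,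
      Finset.mul_sum]
    refine Finset.sum_congr rfl fun i _ => ?_
    have : ∀ i, (s : GaloisField 2 m) ^ 2 ^ (k * i) = s := by
      intro i
      induction i with
      | zero => simp
      | succ n ih => rw [mul_add, mul_one, pow_add, pow_mul, ih]; exact mem_SF.1 s.2
    rw [mul_pow, this]

lemma tau_sq (k m : ℕ) (s : SF k m) : tauHom k m (s ^ 2) = tauHom k m s := by
  apply (algebraMap (ZMod 2) (GaloisField 2 m)).injective
  change algebraMap _ _ (TrSub k m ((s ^ 2 : SF k m) : GaloisField 2 m)) =
    algebraMap _ _ (TrSub k m (s : GaloisField 2 m))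
  rw [algMap_TrSub k m _ (mem_SF.1 s.2), algMap_TrSub k m _ (mem_SF.1 (s ^ 2).2)]
  push_cast
  simp_rw [← pow_mul, ← pow_succ']
  have h1 := Finset.sum_range_succ (fun i => (s : GaloisField 2 m) ^ 2 ^ i) k
  have h2 := Finset.sum_range_succ' (fun i => (s : GaloisField 2 m) ^ 2 ^ i) k
  rw [mem_SF.1 s.2] at h1
  rw [pow_zero, pow_one, h1] at h2
  exact (add_right_cancel h2).symm

lemma sum_zmod2 {M : Type*} [AddCommMonoid M] (F : ZMod 2 → M) : ∑ z, F z = F 0 + F 1 :=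
  Fin.sum_univ_two F

lemma sg_cases (z : ZMod 2) : sg z = 1 ∨ sg z = -1 := by
  unfold sg; split_ifs <;> simp

noncomputable def pairing {K : Type*} [Field K] (t : K →+ ZMod 2) :
    (K × K × ZMod 2 × ZMod 2) →+ (K × K × ZMod 2 × ZMod 2) →+ ZMod 2 :=
  AddMonoidHom.mk' (fun u => AddMonoidHom.mk' (fun p => t (u.1 * p.1) + t (u.2.1 * p.2.1)
      + u.2.2.1 * p.2.2.1 + u.2.2.2 * p.2.2.2) (by
      intro a b
      simp only [Prod.fst_add, Prod.snd_add, mul_add, map_add]; ring)) (by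
    intro a b
    refine AddMonoidHom.ext fun p => ?_
    simp [add_mul]
    ring)

lemma pairing_apply {K : Type*} [Field K] (t : K →+ ZMod 2) (u p : K × K × ZMod 2 × ZMod 2) :
    pairing t u p = t (u.1 * p.1) + t (u.2.1 * p.2.1)
      + u.2.2.1 * p.2.2.1 + u.2.2.2 * p.2.2.2 := rfl

lemma pairing_nondeg {K : Type*} [Field K] (t : K →+ ZMod 2) (x0 : K) (hx0 : t x0 ≠ 0)
    (d : K × K × ZMod 2 × ZMod 2) (hd : d ≠ 0) : ∃ u, pairing t u d ≠ 0 := by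
  obtain ⟨a, b, c, d⟩ := d
  by_cases ha : a = 0
  · by_cases hb : b = 0
    · by_cases hc : c = 0
      · by_cases hd' : d = 0
        · subst ha hb hc hd'; exact absurd rfl hd
        · exact ⟨(0, 0, 0, 1), by simpa [pairing_apply] using hd'⟩
      · exact ⟨(0, 0, 1, 0), by simpa [pairing_apply] using hc⟩
    · exact ⟨(0, x0 * b⁻¹, 0, 0), by simpa [pairing_apply, hb] using hx0⟩
  · exact ⟨(x0 * a⁻¹, 0, 0, 0), by simpa [pairing_apply, ha] using hx0⟩

lemma four_signs (n : ℤ) (A B C w1 w2 : ZMod 2) :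
    (sg 0 * (n * sg A) + sg w2 * (n * sg B) + (sg w1 * (n * sg C)
      + sg (1 + w1 + w2) * (n * sg (A + B + C)))) ^ 2 = 4 * n ^ 2 := by
  have h1 : sg 1 = -1 := by simp [sg]
  simp only [sg_add, sg_zero, h1]
  rcases sg_cases A with h | h <;> rcases sg_cases B with h' | h' <;>
    rcases sg_cases C with h'' | h'' <;> rcases sg_cases w1 with g | g <;>
    rcases sg_cases w2 with g' | g' <;> rw [h, h', h'', g, g'] <;> ring

/-- Theorem 5.2: concatenating components of the vectorial generalized `PS_ap` bent
function gives the bent function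
`f(x,y,z₁,z₂) = Tr_1^k(((1+z₁+z₂)α + z₂β + z₁γ) P(Tr_k^m(y x^{-e}))) + z₁z₂`. -/
theorem concatenation_of_gPSap_components_is_bent
    (m k : ℕ) (hm : 0 < m) (hk : 0 < k) (hkm : k ∣ m)
    (hgcd : Nat.gcd (2 ^ m - 1) (2 ^ k + 1) = 1)
    (e : ℕ) (hee : e = 2 ^ k + 1)
    (P : GaloisField 2 m → GaloisField 2 m)
    (hPsub : Set.BijOn P {u : GaloisField 2 m | u ^ 2 ^ k = u}
      {u : GaloisField 2 m | u ^ 2 ^ k = u})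
    (α β γ : GaloisField 2 m)
    (hα : α ^ 2 ^ k = α) (hβ : β ^ 2 ^ k = β) (hγ : γ ^ 2 ^ k = γ)
    (hα0 : α ≠ 0) (hβ0 : β ≠ 0) (hγ0 : γ ≠ 0) (hsum : α + β + γ ≠ 0)
    (f : GaloisField 2 m × GaloisField 2 m × ZMod 2 × ZMod 2 → ZMod 2)
    (hf : ∀ (x y : GaloisField 2 m) (z₁ z₂ : ZMod 2),
      f (x, y, z₁, z₂) =
        TrSub k m
          (((1 + algebraMap (ZMod 2) (GaloisField 2 m) z₁ +
              algebraMap (ZMod 2) (GaloisField 2 m) z₂) * α +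
            algebraMap (ZMod 2) (GaloisField 2 m) z₂ * β +
            algebraMap (ZMod 2) (GaloisField 2 m) z₁ * γ) *
            P (TrRel k m (y * (x⁻¹) ^ e))) + z₁ * z₂) :
    ∀ (a b : GaloisField 2 m) (c₁ c₂ : ZMod 2),
      (a, b, c₁, c₂) ≠ ((0, 0, 0, 0) :
        GaloisField 2 m × GaloisField 2 m × ZMod 2 × ZMod 2) →
      ∀ c : ZMod 2,
        Nat.card {p : GaloisField 2 m × GaloisField 2 m × ZMod 2 × ZMod 2 //
          f (p.1 + a, p.2.1 + b, p.2.2.1 + c₁, p.2.2.2 + c₂) + f p = c} =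
        2 ^ (2 * m + 1) := by
  letI := Fintype.ofFinite (GaloisField 2 m)
  have hcard : Fintype.card (GaloisField 2 m) = 2 ^ m := by
    rw [← Nat.card_eq_fintype_card, GaloisField.card 2 m hm.ne']
  let S := SF k m
  let τ := tauHom k m
  let R := RHom k m hm hkm
  let t : (GaloisField 2 m) →+ ZMod 2 := τ.comp R.toAddMonoidHom
  have hn : ∃ x, τ (R x) ≠ 0 := by
    by_contra! hall
    have h0 : Algebra.trace (ZMod 2) (GaloisField 2 m) = 0 := by
      refine LinearMap.ext fun x => ?_
      rw [← TrSub_TrRel k m hm hkm x]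
      exact hall x
    exact Algebra.trace_ne_zero (ZMod 2) (GaloisField 2 m) h0
  let p : S ≃ S := hPsub.equiv P
  have hp : ∀ s : S, ((p s : S) : (GaloisField 2 m)) = P s := fun s => rfl
  have he0 : e ≠ 0 := by rw [hee]; exact Nat.succ_ne_zero _
  have hinj := pow_inj_of_gcd m e hm (by rw [hee]; exact hgcd) he0
  have hS : ∀ s : S, (s : (GaloisField 2 m)) ^ e = (s : (GaloisField 2 m)) ^ 2 := by
    intro s
    rw [hee, pow_succ, mem_SF.1 s.2, sq]
  have hlmem : ∀ z₁ z₂ : ZMod 2, ((1 + algebraMap (ZMod 2) (GaloisField 2 m) z₁ +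
              algebraMap (ZMod 2) (GaloisField 2 m) z₂) * α +
            algebraMap (ZMod 2) (GaloisField 2 m) z₂ * β +
            algebraMap (ZMod 2) (GaloisField 2 m) z₁ * γ) ∈ SF k m := by
    have hz : ∀ z : ZMod 2, algebraMap (ZMod 2) (GaloisField 2 m) z ∈ SF k m := by
      intro z
      rcases zc z with rfl | rfl
      · rw [map_zero]; exact zero_mem _
      · rw [map_one]; exact one_mem _
    intro z₁ z₂
    exact add_mem (add_mem (mul_mem (add_mem (add_mem (one_mem _) (hz _)) (hz _)) hα)
      (mul_mem (hz _) hβ)) (mul_mem (hz _) hγ)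
  let l : ZMod 2 → ZMod 2 → S := fun z₁ z₂ => ⟨_, hlmem z₁ z₂⟩
  have h11 : (1 : (GaloisField 2 m)) + 1 = 0 := CharTwo.add_self_eq_zero 1
  have l00 : l 0 0 = ⟨α, hα⟩ := by ext; simp [l]
  have l01 : l 0 1 = ⟨β, hβ⟩ := by ext; simp [l, h11]
  have l10 : l 1 0 = ⟨γ, hγ⟩ := by ext; simp [l, h11]
  have l11 : l 1 1 = ⟨α, hα⟩ + ⟨β, hβ⟩ + ⟨γ, hγ⟩ := by ext; simp [l, h11]
  have hl : ∀ z₁ z₂, l z₁ z₂ ≠ 0 := by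
    intro z₁ z₂
    rcases zc z₁ with rfl | rfl <;> rcases zc z₂ with rfl | rfl
    · rw [l00]; exact fun h => hα0 (congrArg Subtype.val h)
    · rw [l01]; exact fun h => hβ0 (congrArg Subtype.val h)
    · rw [l10]; exact fun h => hγ0 (congrArg Subtype.val h)
    · rw [l11]; exact fun h => hsum (congrArg Subtype.val h)
  have hf' : ∀ x y z₁ z₂, f (x, y, z₁, z₂) = τ (l z₁ z₂ * p (R (y * (x⁻¹) ^ e))) + z₁ * z₂ :=
    fun x y z₁ z₂ => hf x y z₁ z₂
  have hcG : Fintype.card ((GaloisField 2 m) × (GaloisField 2 m) × ZMod 2 × ZMod 2) = 2 * 2 ^ (2 * m + 1) := by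
    simp only [Fintype.card_prod, hcard, ZMod.card]; ring
  have hW : ∀ u, (∑ q, sg (f q) * sg (pairing t u q)) ^ 2
      = (Fintype.card ((GaloisField 2 m) × (GaloisField 2 m) × ZMod 2 × ZMod 2) : ℤ) := by
    rintro ⟨u, v, w₁, w₂⟩
    obtain ⟨V, hV⟩ := (Finite.injective_iff_surjective.1 hinj) v⁻¹
    have main : ∀ z₁ z₂, ∑ x : (GaloisField 2 m), ∑ y : (GaloisField 2 m), sg (f (x, y, z₁, z₂)) *
        sg (pairing t (u, v, w₁, w₂) (x, y, z₁, z₂)) =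
        sg (z₁ * z₂ + w₁ * z₁ + w₂ * z₂) *
          (Fintype.card (GaloisField 2 m) * sg (τ (l z₁ z₂ * p (R (u * V) ^ 2)))) := by
      intro z₁ z₂
      rw [← walsh S τ R hn p e hinj hS (tau_sq k m) (l z₁ z₂) (hl z₁ z₂) u v V hV,
        Finset.mul_sum]
      refine Finset.sum_congr rfl fun x _ => ?_
      rw [Finset.mul_sum]
      refine Finset.sum_congr rfl fun y _ => ?_
      rw [hf', pairing_apply]
      change _ * sg (τ (R (u * x)) + τ (R (v * y)) + w₁ * z₁ + w₂ * z₂) = _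
      simp only [sg_add]
      ring
    have hsplit : ∑ q, sg (f q) * sg (pairing t (u, v, w₁, w₂) q) =
        ∑ z₁ : ZMod 2, ∑ z₂ : ZMod 2, ∑ x : (GaloisField 2 m), ∑ y : (GaloisField 2 m), sg (f (x, y, z₁, z₂)) *
        sg (pairing t (u, v, w₁, w₂) (x, y, z₁, z₂)) := by
      simp only [Fintype.sum_prod_type, sum_zmod2, Finset.sum_add_distrib]
    rw [hsplit]
    simp only [main, sum_zmod2, l00, l01, l10, l11, add_mul, map_add]
    simp only [mul_zero, mul_one, add_zero, zero_add]
    rw [four_signs, hcG, hcard]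
    push_cast
    ring
  intro a b c₁ c₂ hne c
  obtain ⟨x0, hx0⟩ := hn
  have hfin := balanced (pairing t) (pairing_nondeg t x0 hx0) (by
    rintro ⟨x, y, z, w⟩
    exact Prod.ext (CharTwo.add_self_eq_zero x) (Prod.ext (CharTwo.add_self_eq_zero y)
      (Prod.ext (CharTwo.add_self_eq_zero z) (CharTwo.add_self_eq_zero w)))) f hW
    (a, b, c₁, c₂) hne c
  rw [hcG] at hfin
  exact Nat.eq_of_mul_eq_mul_left two_pos hfin
end
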